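/- arXiv:1411.1191 — 3 statements merged into one kernel-verified Lean document; each statement's English description precedes it below -/
import Mathlib

section
/- Let p be an odd prime with p > 4. Then (p^2/2^5) · Σ_{θ=1}^{p-1} 1/sin^4(πθ/p) = (p^6 + 10p^4 - 11p^2)/1440. (This is the genus-3 case of the degree formula of Corollary 5.4.) -/
/-!
The parabola `j ↦ j (n - j)` on `{0, …, n - 1}` has a discrete Fourier transform that can be
computed in closed form: at an `n`-th root of unity `z ≠ 1` it equals `2 n z / (z - 1) ^ 2`, and for
`z = exp (2 π i k / n)` this has absolute value `n / (2 sin² (π k / n))`. Parseval's identity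
therefore expresses `∑ 1 / sin⁴ (π k / n)` through the elementary sums `∑ j (n - j)`, which is the
transform at `z = 1`, and `∑ (j (n - j))²`.
-/

open Real

section ParabolicSums

variable {R : Type*} [CommRing R]

theorem six_mul_sum_range_mul_sub (N : R) (n : ℕ) :
    6 * ∑ j ∈ Finset.range n, (j : R) * (N - j) = n * (n - 1) * (3 * N - 2 * n + 1) := by
  induction n with
  | zero => simp
  | succ n ih =>
    rw [Finset.sum_range_succ, mul_add, ih]
    push_cast
    ring

theorem thirty_mul_sum_range_mul_sub_sq (N : R) (n : ℕ) :
    30 * ∑ j ∈ Finset.range n, ((j : R) * (N - j)) ^ 2 =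
      n * (n - 1) * (5 * (2 * n - 1) * N ^ 2 - 15 * n * (n - 1) * N
        + (2 * n - 1) * (3 * n ^ 2 - 3 * n - 1)) := by
  induction n with
  | zero => simp
  | succ n ih =>
    rw [Finset.sum_range_succ, mul_add, ih]
    push_cast
    ring

theorem sub_one_sq_mul_sum_range_mul_sub_mul_pow (N z : R) (n : ℕ) :
    (z - 1) ^ 2 * ∑ j ∈ Finset.range n, (j : R) * (N - j) * z ^ j =
      (n - 1) * (N - n + 1) * z ^ (n + 1) - n * (N - n) * z ^ n + (N + 1) * z
        - 2 * z * ∑ j ∈ Finset.range n, z ^ j := by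
  induction n with
  | zero =>
    simp only [Nat.cast_zero, Finset.range_zero, Finset.sum_empty]
    ring
  | succ n ih =>
    rw [Finset.sum_range_succ, Finset.sum_range_succ, mul_add, mul_add, ih]
    push_cast
    ring

variable [IsDomain R]

theorem geom_sum_eq_zero_of_pow_eq_one {z : R} {n : ℕ} (hz : z ^ n = 1) (hz1 : z ≠ 1) :
    ∑ j ∈ Finset.range n, z ^ j = 0 := by
  have h : (∑ j ∈ Finset.range n, z ^ j) * (z - 1) = 0 := by rw [geom_sum_mul, hz, sub_self]
  exact (mul_eq_zero.1 h).resolve_right (sub_ne_zero.2 hz1)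

theorem sub_one_sq_mul_sum_range_mul_sub_mul_pow_of_pow_eq_one {z : R} {n : ℕ}
    (hz : z ^ n = 1) (hz1 : z ≠ 1) :
    (z - 1) ^ 2 * ∑ j ∈ Finset.range n, (j : R) * (n - j) * z ^ j = 2 * n * z := by
  rw [sub_one_sq_mul_sum_range_mul_sub_mul_pow, geom_sum_eq_zero_of_pow_eq_one hz hz1, pow_succ, hz]
  ring

end ParabolicSums

section Parseval

theorem sum_range_pow_pow_mul_inv_pow {K : Type*} [Field K] {ζ : K} {n : ℕ}
    (hζ : IsPrimitiveRoot ζ n) {i j : ℕ} (hi : i < n) (hj : j < n) :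
    ∑ k ∈ Finset.range n, (ζ ^ k) ^ i * ((ζ ^ k)⁻¹) ^ j = if i = j then (n : K) else 0 := by
  have hζ0 : ζ ≠ 0 := hζ.ne_zero (by lia)
  have hgeom : ∑ k ∈ Finset.range n, (ζ ^ k) ^ i * ((ζ ^ k)⁻¹) ^ j =
      ∑ k ∈ Finset.range n, (ζ ^ i * (ζ ^ j)⁻¹) ^ k := by
    refine Finset.sum_congr rfl fun k _ => ?_
    rw [mul_pow, inv_pow, inv_pow, pow_right_comm ζ k i, pow_right_comm ζ k j]
  rw [hgeom]
  split_ifs with hij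
  · simp [hij, hζ0]
  · refine geom_sum_eq_zero_of_pow_eq_one ?_ fun h => hij ?_
    · rw [mul_pow, inv_pow, pow_right_comm ζ i n, pow_right_comm ζ j n, hζ.pow_eq_one]
      simp
    · exact hζ.pow_inj hi hj ((mul_inv_eq_one₀ (pow_ne_zero j hζ0)).1 h)

theorem sum_range_mul_sum_range_pow_inv {K : Type*} [Field K] {ζ : K} {n : ℕ}
    (hζ : IsPrimitiveRoot ζ n) (f g : ℕ → K) :
    ∑ k ∈ Finset.range n, (∑ i ∈ Finset.range n, f i * (ζ ^ k) ^ i) *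
        ∑ j ∈ Finset.range n, g j * ((ζ ^ k)⁻¹) ^ j =
      n * ∑ j ∈ Finset.range n, f j * g j := by
  calc
    _ = ∑ i ∈ Finset.range n, ∑ j ∈ Finset.range n,
          f i * g j * ∑ k ∈ Finset.range n, (ζ ^ k) ^ i * ((ζ ^ k)⁻¹) ^ j := by
      simp_rw [Finset.sum_mul_sum, mul_mul_mul_comm (f _)]
      rw [Finset.sum_comm]
      refine Finset.sum_congr rfl fun i _ => ?_
      rw [Finset.sum_comm]
      simp_rw [Finset.mul_sum]
    _ = ∑ i ∈ Finset.range n, ∑ j ∈ Finset.range n, f i * g j * if i = j then (n : K) else 0 :=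
      Finset.sum_congr rfl fun i hi => Finset.sum_congr rfl fun j hj => by
        rw [sum_range_pow_pow_mul_inv_pow hζ (Finset.mem_range.1 hi) (Finset.mem_range.1 hj)]
    _ = n * ∑ j ∈ Finset.range n, f j * g j := by
      rw [Finset.mul_sum]
      refine Finset.sum_congr rfl fun i hi => ?_
      simp_rw [mul_ite, mul_zero, Finset.sum_ite_eq, if_pos hi, mul_comm]

theorem sum_range_norm_sq_sum_range_mul_pow {𝕜 : Type*} [RCLike 𝕜] {ζ : 𝕜} {n : ℕ}
    (hζ : IsPrimitiveRoot ζ n) (f : ℕ → 𝕜) :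
    ∑ k ∈ Finset.range n, ‖∑ j ∈ Finset.range n, f j * (ζ ^ k) ^ j‖ ^ 2 =
      n * ∑ j ∈ Finset.range n, ‖f j‖ ^ 2 := by
  rcases eq_or_ne n 0 with rfl | hn
  · simp
  have hconj (k : ℕ) : (starRingEnd 𝕜) (ζ ^ k) = (ζ ^ k)⁻¹ :=
    (RCLike.inv_eq_conj (hζ.isOfFinOrder hn).pow.norm_eq_one).symm
  have h := sum_range_mul_sum_range_pow_inv hζ f fun j => (starRingEnd 𝕜) (f j)
  simp_rw [← hconj, ← map_pow, ← map_mul, ← map_sum, RCLike.mul_conj] at h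
  exact_mod_cast h

end Parseval

section CosecantSums

theorem norm_exp_two_pi_mul_I_div_pow_sub_one (n k : ℕ) :
    ‖Complex.exp (2 * π * Complex.I / n) ^ k - 1‖ = 2 * |Real.sin (π * k / n)| := by
  have harg : Complex.exp (2 * π * Complex.I / n) ^ k =
      Complex.exp (Complex.I * (2 * (π * k / n) : ℝ)) := by
    rw [← Complex.exp_nat_mul]
    push_cast
    ring_nf
  rw [harg, Complex.norm_exp_I_mul_ofReal_sub_one, mul_div_cancel_left₀ _ two_ne_zero, norm_mul,
    Real.norm_ofNat, Real.norm_eq_abs]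

theorem norm_sq_sum_range_mul_sub_mul_exp_pow {n k : ℕ} (hk : 0 < k) (hkn : k < n) :
    ‖∑ j ∈ Finset.range n,
        (j : ℂ) * (n - j) * (Complex.exp (2 * π * Complex.I / n) ^ k) ^ j‖ ^ 2 =
      (n : ℝ) ^ 2 / 4 * (1 / Real.sin (π * k / n) ^ 4) := by
  have hζ := Complex.isPrimitiveRoot_exp n (by lia)
  have hnorm := norm_exp_two_pi_mul_I_div_pow_sub_one n k
  set ζ := Complex.exp (2 * π * Complex.I / n)
  have hz : (ζ ^ k) ^ n = 1 := by rw [pow_right_comm, hζ.pow_eq_one, one_pow]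
  have hz1 : ζ ^ k ≠ 1 := hζ.pow_ne_one_of_pos_of_lt hk.ne' hkn
  have hsin : Real.sin (π * k / n) ≠ 0 := by
    intro h
    rw [h, abs_zero, mul_zero, norm_eq_zero, sub_eq_zero] at hnorm
    exact hz1 hnorm
  have h := congrArg norm (sub_one_sq_mul_sum_range_mul_sub_mul_pow_of_pow_eq_one hz hz1)
  rw [norm_mul, norm_pow, hnorm, mul_pow, sq_abs, norm_mul, norm_mul, Complex.norm_ofNat,
    Complex.norm_natCast, Complex.norm_eq_one_of_pow_eq_one hz (by lia)] at h
  rw [eq_div_of_mul_eq (by positivity) ((mul_comm _ _).trans h)]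
  field

theorem sq_sum_range_mul_sub_add_sum_Ico_one_div_sin_pow_four {n : ℕ} (hn : n ≠ 0) :
    (∑ j ∈ Finset.range n, (j : ℝ) * (n - j)) ^ 2
        + (n : ℝ) ^ 2 / 4 * ∑ k ∈ Finset.Ico 1 n, 1 / Real.sin (π * k / n) ^ 4 =
      n * ∑ j ∈ Finset.range n, ((j : ℝ) * (n - j)) ^ 2 := by
  have norm_sq_ofReal (x : ℝ) : ‖(x : ℂ)‖ ^ 2 = x ^ 2 := by
    rw [Complex.norm_real, Real.norm_eq_abs, sq_abs]
  have hcoeff (j : ℕ) : ‖(j : ℂ) * (n - j)‖ ^ 2 = ((j : ℝ) * (n - j)) ^ 2 := by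
    rw [← norm_sq_ofReal (j * (n - j))]
    push_cast
    rfl
  have hzero : ‖∑ j ∈ Finset.range n,
      (j : ℂ) * (n - j) * (Complex.exp (2 * π * Complex.I / n) ^ 0) ^ j‖ ^ 2 =
        (∑ j ∈ Finset.range n, (j : ℝ) * (n - j)) ^ 2 := by
    rw [← norm_sq_ofReal (∑ j ∈ Finset.range n, (j : ℝ) * (n - j))]
    push_cast
    simp only [pow_zero, one_pow, mul_one]
  have hpos : ∀ k ∈ Finset.Ico 1 n, ‖∑ j ∈ Finset.range n,
      (j : ℂ) * (n - j) * (Complex.exp (2 * π * Complex.I / n) ^ k) ^ j‖ ^ 2 =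
        (n : ℝ) ^ 2 / 4 * (1 / Real.sin (π * k / n) ^ 4) := fun k hk =>
    norm_sq_sum_range_mul_sub_mul_exp_pow (Finset.mem_Ico.1 hk).1 (Finset.mem_Ico.1 hk).2
  have hparseval := sum_range_norm_sq_sum_range_mul_pow (Complex.isPrimitiveRoot_exp n hn)
    fun j => (j : ℂ) * (n - j)
  rwa [Finset.sum_range_eq_add_Ico _ (Nat.pos_of_ne_zero hn), hzero, Finset.sum_congr rfl hpos,
    ← Finset.mul_sum, Finset.sum_congr rfl fun j _ => hcoeff j] at hparseval

theorem sum_Ico_one_div_sin_pow_four {n : ℕ} (hn : n ≠ 0) :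
    ∑ k ∈ Finset.Ico 1 n, 1 / Real.sin (π * k / n) ^ 4 =
      ((n : ℝ) ^ 2 - 1) * (n ^ 2 + 11) / 45 := by
  have hsum : ∑ j ∈ Finset.range n, (j : ℝ) * (n - j) = n * (n ^ 2 - 1) / 6 := by
    linear_combination six_mul_sum_range_mul_sub (n : ℝ) n / 6
  have hsumsq : ∑ j ∈ Finset.range n, ((j : ℝ) * (n - j)) ^ 2 = n * (n ^ 4 - 1) / 30 := by
    linear_combination thirty_mul_sum_range_mul_sub_sq (n : ℝ) n / 30
  have hparseval := sq_sum_range_mul_sub_add_sum_Ico_one_div_sin_pow_four hn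
  rw [hsum, hsumsq] at hparseval
  have hn2 : (n : ℝ) ^ 2 ≠ 0 := pow_ne_zero 2 (Nat.cast_ne_zero.2 hn)
  apply mul_left_cancel₀ hn2
  linear_combination 4 * hparseval

theorem stmt_8_general {n : ℕ} (hn : n ≠ 0) :
    ((n : ℝ) ^ 2 / 2 ^ 5) * ∑ θ ∈ Finset.Icc 1 (n - 1), 1 / Real.sin (π * θ / n) ^ 4 =
      ((n : ℝ) ^ 6 + 10 * n ^ 4 - 11 * n ^ 2) / 1440 := by
  rw [Finset.Icc_sub_one_right_eq_Ico_of_not_isMin (by simpa using hn),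
    sum_Ico_one_div_sin_pow_four hn]
  ring

end CosecantSums

theorem stmt_8 (p : ℕ) (hp : p.Prime) (hodd : Odd p) (hp4 : 4 < p) :
    ((p : ℝ) ^ 2 / 2 ^ 5) * ∑ θ ∈ Finset.Icc 1 (p - 1), 1 / Real.sin (π * θ / p) ^ 4 =
      ((p : ℝ) ^ 6 + 10 * p ^ 4 - 11 * p ^ 2) / 1440 :=
  stmt_8_general hp.ne_zero
end

section
/- Let p be an odd prime with p > 8. Then (p^4/2^9) · Σ_{θ=1}^{p-1} 1/sin^8(πθ/p) = (3p^12 + 40p^10 + 294p^8 + 2160p^6 - 2497p^4)/7257600. (This is the genus-5 case of the degree formula of Corollary 5.4.) -/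
open Real

/-!
The numbers `csc² (π k / n)`, `1 ≤ k ≤ n - 1`, are the reciprocal roots of a polynomial whose
coefficients are known explicitly. Indeed the roots of the Chebyshev polynomial `U_{n-1}` give the
finite product
`sin² (n x) = n² sin² x ∏ k, (1 - csc² (π k / n) sin² x)`,
and since `1 - cos (2 n x) = 2 sin² (n x)` this is the polynomial identity
`1 - T_n (1 - 2 X) = 2 n² X ∏ k, (1 - csc² (π k / n) X)`.
The Taylor coefficients of `T_n` at `1` therefore yield the elementary symmetric functions of the
`csc² (π k / n)`, and Newton's identities turn these into the sum of their fourth powers.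
-/

section ElementarySymmetric

open Finset Polynomial
open MvPolynomial (psum esymm)

theorem psum_four_eq_esymm (σ R : Type*) [Fintype σ] [CommRing R] :
    psum σ R 4 =
      esymm σ R 1 ^ 4 - 4 * esymm σ R 1 ^ 2 * esymm σ R 2 + 2 * esymm σ R 2 ^ 2
        + 4 * esymm σ R 1 * esymm σ R 3 - 4 * esymm σ R 4 := by
  have newton {k : ℕ} (hk : 0 < k) := MvPolynomial.psum_eq_mul_esymm_sub_sum σ R k hk
  have indices_two : {a ∈ antidiagonal 2 | a.1 ∈ Set.Ioo 0 2} = {(1, 1)} := by decide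
  have indices_three : {a ∈ antidiagonal 3 | a.1 ∈ Set.Ioo 0 3} = {(1, 2), (2, 1)} := by decide
  have indices_four : {a ∈ antidiagonal 4 | a.1 ∈ Set.Ioo 0 4} = {(1, 3), (2, 2), (3, 1)} := by
    decide
  have psum_two : psum σ R 2 = esymm σ R 1 * psum σ R 1 - 2 * esymm σ R 2 := by
    rw [newton two_pos, indices_two, sum_singleton]
    push_cast
    ring
  have psum_three : psum σ R 3 =
      esymm σ R 1 * psum σ R 2 - esymm σ R 2 * psum σ R 1 + 3 * esymm σ R 3 := by
    rw [newton three_pos, indices_three, sum_pair (by decide)]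
    push_cast
    ring
  have psum_four : psum σ R 4 =
      esymm σ R 1 * psum σ R 3 - esymm σ R 2 * psum σ R 2 + esymm σ R 3 * psum σ R 1
        - 4 * esymm σ R 4 := by
    rw [newton four_pos, indices_four, sum_insert (by decide), sum_pair (by decide)]
    push_cast
    ring
  rw [psum_four, psum_three, psum_two, MvPolynomial.psum_one, MvPolynomial.esymm_one]
  ring

variable {ι R : Type*} [CommRing R] (s : Finset ι) (a : ι → R)

theorem sum_pow_four_eq_esymm :
    ∑ i ∈ s, a i ^ 4 =
      (s.val.map a).esymm 1 ^ 4 - 4 * (s.val.map a).esymm 1 ^ 2 * (s.val.map a).esymm 2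
        + 2 * (s.val.map a).esymm 2 ^ 2 + 4 * (s.val.map a).esymm 1 * (s.val.map a).esymm 3
        - 4 * (s.val.map a).esymm 4 := by
  have map_univ : (univ : Finset s).val.map (fun i : s ↦ a i) = s.val.map a :=
    Multiset.attach_map_val' s.val a
  have newton_at_a := congrArg (MvPolynomial.aeval fun i : s ↦ a i) (psum_four_eq_esymm s R)
  simpa only [psum, map_sum, map_sub, map_add, map_mul, map_pow, map_ofNat,
    MvPolynomial.aeval_X, MvPolynomial.aeval_esymm_eq_multiset_esymm, map_univ,
    sum_coe_sort s (fun i ↦ a i ^ 4)] using newton_at_a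

theorem coeff_prod_one_sub_C_mul_X (k : ℕ) :
    (∏ i ∈ s, (1 - C (a i) * X)).coeff k = (-1) ^ k * (s.val.map a).esymm k := by
  have prod_monomial (t : Finset ι) :
      ∏ i ∈ t, -(C (a i) * X) = C ((-1) ^ #t * ∏ i ∈ t, a i) * X ^ #t := by
    simp [prod_neg, prod_mul_distrib, map_prod, mul_assoc]
  simp only [sub_eq_add_neg, prod_one_add, prod_monomial, finsetSum_coeff, coeff_C_mul_X_pow,
    esymm_map_val, mul_sum]
  rw [← sum_filter, filter_congr fun _ _ ↦ eq_comm, ← powersetCard_eq_filter]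
  exact sum_congr rfl fun t ht ↦ by rw [(mem_powersetCard.mp ht).2]

end ElementarySymmetric

section CosecantSums

open Finset Polynomial

theorem coeff_comp_C_add_C_mul_X {K : Type*} [Field K] [CharZero K] (f : K[X]) (a b : K) (k : ℕ) :
    (f.comp (C a + C b * X)).coeff k = b ^ k * (derivative^[k] f).eval a / k.factorial := by
  have comp_eq : f.comp (C a + C b * X) = (taylor a f).comp (C b * X) := by
    simp [taylor_apply, comp_assoc, add_comm]
  have eval_eq : (derivative^[k] f).eval a = k.factorial * (hasseDeriv k f).eval a := by
    simp [← factorial_smul_hasseDeriv]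
  rw [comp_eq, comp_C_mul_X_coeff, taylor_coeff, eval_eq]
  field [k.factorial_ne_zero]

theorem prod_odd_mul_two_pow_mul_factorial (k : ℕ) :
    (∏ l ∈ range k, (2 * l + 1)) * (2 ^ k * k.factorial) = (2 * k).factorial := by
  induction k with
  | zero => simp
  | succ k ih =>
    rw [prod_range_succ, show 2 * (k + 1) = 2 * k + 1 + 1 by ring, Nat.factorial_succ (2 * k + 1),
      Nat.factorial_succ (2 * k), Nat.factorial_succ k, ← ih]
    ring

theorem coeff_one_sub_T_comp (n k : ℕ) :
    (1 - (Chebyshev.T ℝ n).comp (C 1 + C (-2) * X)).coeff (k + 1) =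
      (-1) ^ k * 4 ^ (k + 1) * (n : ℝ) ^ 2 *
        (∏ l ∈ range k, ((n : ℝ) ^ 2 - (l + 1) ^ 2)) / (2 * k + 2).factorial := by
  have prod_odd_ne_zero : ∏ l ∈ range (k + 1), (2 * l + 1 : ℝ) ≠ 0 :=
    prod_ne_zero_iff.mpr fun _ _ ↦ by positivity
  have factorial_ne_zero : ((k + 1).factorial : ℝ) ≠ 0 := by positivity
  have four_pow : (4 : ℝ) ^ (k + 1) = 2 ^ (k + 1) * 2 ^ (k + 1) := by rw [← mul_pow]; norm_num
  rw [coeff_sub, coeff_one, if_neg k.succ_ne_zero, coeff_comp_C_add_C_mul_X,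
    Chebyshev.iterate_derivative_T_eval_one_eq_div, ← mul_add_one,
    ← prod_odd_mul_two_pow_mul_factorial, prod_range_succ', four_pow, neg_pow 2]
  push_cast
  field_simp
  ring

theorem eval_U_eq_prod_sub_cos (m : ℕ) (x : ℝ) :
    (Chebyshev.U ℝ m).eval x = 2 ^ m * ∏ k ∈ Icc 1 m, (x - cos (π * k / (m + 1))) := by
  have roots_eq : (Chebyshev.U ℝ m).roots =
      (range m).val.map fun k : ℕ ↦ cos (π * (k + 1 : ℕ) / (m + 1)) := by
    rw [Chebyshev.roots_U_real, image_val, range_val, (Chebyshev.roots_U_real_nodup m).dedup]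
    simp only [mul_comm, Nat.cast_succ]
  have card_roots : (Chebyshev.U ℝ m).roots.card = (Chebyshev.U ℝ m).natDegree := by
    simp [roots_eq]
  rw [← C_leadingCoeff_mul_prod_multiset_X_sub_C card_roots, roots_eq, Multiset.map_map,
    prod_map_val, Chebyshev.leadingCoeff_U_natCast, eval_mul, eval_C, eval_prod, range_eq_Ico]
  simp only [Function.comp_apply, eval_sub, eval_X, eval_C]
  rw [prod_Ico_add' (fun k : ℕ ↦ x - cos (π * k / (m + 1)))]
  rfl

theorem eval_U_eq_prod_add_cos (m : ℕ) (x : ℝ) :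
    (Chebyshev.U ℝ m).eval x = 2 ^ m * ∏ k ∈ Icc 1 m, (x + cos (π * k / (m + 1))) := by
  have neg_sub_cos (k : ℕ) :
      -x - cos (π * k / (m + 1)) = -(x + cos (π * k / (m + 1))) := by ring
  have parity := Chebyshev.U_eval_neg ℝ m (-x)
  rw [neg_neg, eval_U_eq_prod_sub_cos m (-x)] at parity
  simp only [neg_sub_cos, prod_neg, Nat.card_Icc] at parity
  simp [parity, Int.coe_negOnePow_natCast, ← mul_assoc, ← mul_pow]

theorem sq_eval_U_eq_prod (m : ℕ) (x : ℝ) :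
    (Chebyshev.U ℝ m).eval x ^ 2 =
      4 ^ m * ∏ k ∈ Icc 1 m, (x ^ 2 - cos (π * k / (m + 1)) ^ 2) := by
  calc
    _ = (2 ^ m * ∏ k ∈ Icc 1 m, (x + cos (π * k / (m + 1)))) *
        (2 ^ m * ∏ k ∈ Icc 1 m, (x - cos (π * k / (m + 1)))) := by
      rw [← eval_U_eq_prod_add_cos, ← eval_U_eq_prod_sub_cos, sq]
    _ = (2 * 2) ^ m * ∏ k ∈ Icc 1 m, (x ^ 2 - cos (π * k / (m + 1)) ^ 2) := by
      simp only [mul_mul_mul_comm, ← mul_pow, ← prod_mul_distrib, sq_sub_sq]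
    _ = _ := by norm_num

theorem sin_pi_mul_div_ne_zero {k n : ℕ} (hk : 0 < k) (hkn : k < n) : sin (π * k / n) ≠ 0 := by
  have hn : (0 : ℝ) < n := by exact_mod_cast hk.trans hkn
  refine (sin_pos_of_pos_of_lt_pi (by positivity) ?_).ne'
  rw [div_lt_iff₀ hn]
  gcongr

theorem sq_sin_nat_mul {n : ℕ} (hn : n ≠ 0) (x : ℝ) :
    sin (n * x) ^ 2 =
      n ^ 2 * sin x ^ 2 * ∏ k ∈ Icc 1 (n - 1), (1 - 1 / sin (π * k / n) ^ 2 * sin x ^ 2) := by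
  obtain ⟨m, rfl⟩ := Nat.exists_eq_add_one_of_ne_zero hn
  rw [Nat.add_sub_cancel, Nat.cast_add_one]
  have sq_cos_sub_sq_cos : ∀ k ∈ Icc 1 m, cos x ^ 2 - cos (π * k / (m + 1)) ^ 2 =
      sin (π * k / (m + 1)) ^ 2 * (1 - 1 / sin (π * k / (m + 1)) ^ 2 * sin x ^ 2) := by
    intro k hk
    obtain ⟨one_le, le_m⟩ := mem_Icc.mp hk
    have sin_ne_zero : sin (π * k / (m + 1)) ≠ 0 := by
      exact_mod_cast sin_pi_mul_div_ne_zero one_le (Nat.lt_succ_of_le le_m)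
    rw [cos_sq', cos_sq']
    field
  have sq_add_one : (m + 1 : ℝ) ^ 2 = 4 ^ m * ∏ k ∈ Icc 1 m, sin (π * k / (m + 1)) ^ 2 := by
    simpa [sin_sq] using sq_eval_U_eq_prod m 1
  have sin_add_one_mul : sin ((m + 1) * x) = (Chebyshev.U ℝ m).eval (cos x) * sin x := by
    simp
  rw [sin_add_one_mul, mul_pow, sq_eval_U_eq_prod, sq_add_one, prod_congr rfl sq_cos_sub_sq_cos,
    prod_mul_distrib]
  ring

theorem one_sub_T_comp_eq_prod {n : ℕ} (hn : n ≠ 0) :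
    1 - (Chebyshev.T ℝ n).comp (C 1 + C (-2) * X) =
      C (2 * n ^ 2 : ℝ) * X * ∏ k ∈ Icc 1 (n - 1), (1 - C (1 / sin (π * k / n) ^ 2) * X) := by
  refine eq_of_infinite_eval_eq _ _ ((Set.Icc_infinite (zero_lt_one (α := ℝ))).mono fun t ht ↦ ?_)
  obtain ⟨x, rfl⟩ : ∃ x, t = sin x ^ 2 :=
    ⟨arcsin √t, by
      rw [sin_arcsin (by linarith [sqrt_nonneg t]) (sqrt_le_one.mpr ht.2), sq_sqrt ht.1]⟩
  have cos_two_mul_eq (y : ℝ) : cos (2 * y) = 1 + -2 * sin y ^ 2 := by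
    rw [cos_two_mul, cos_sq']
    ring
  have eval_T : (Chebyshev.T ℝ n).eval (1 + -2 * sin x ^ 2) = 1 + -2 * sin (n * x) ^ 2 := by
    rw [← cos_two_mul_eq, Chebyshev.T_real_cos, Int.cast_natCast, mul_left_comm, cos_two_mul_eq]
  simp only [Set.mem_ofPred_eq, eval_sub, eval_one, eval_comp, eval_add, eval_mul, eval_C, eval_X,
    eval_prod, eval_T, sq_sin_nat_mul hn]
  ring

theorem esymm_one_div_sq_sin {n : ℕ} (hn : n ≠ 0) (k : ℕ) :
    ((Icc 1 (n - 1)).val.map fun j : ℕ ↦ 1 / sin (π * j / n) ^ 2).esymm k =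
      2 * 4 ^ k * (∏ l ∈ range k, ((n : ℝ) ^ 2 - (l + 1) ^ 2)) / ((2 * k + 2).factorial : ℝ) := by
  have coeff_eq := congrArg (coeff · (k + 1)) (one_sub_T_comp_eq_prod hn)
  simp only [coeff_one_sub_T_comp, mul_assoc, coeff_C_mul, coeff_X_mul,
    coeff_prod_one_sub_C_mul_X] at coeff_eq
  refine mul_left_cancel₀ (a := 2 * (n : ℝ) ^ 2 * (-1) ^ k) (by simp [hn]) ?_
  linear_combination -coeff_eq

theorem sum_one_div_sin_pow_eight {n : ℕ} (hn : n ≠ 0) :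
    ∑ k ∈ Icc 1 (n - 1), 1 / sin (π * k / n) ^ 8 =
      (3 * (n : ℝ) ^ 8 + 40 * n ^ 6 + 294 * n ^ 4 + 2160 * n ^ 2 - 2497) / 14175 := by
  have newton := sum_pow_four_eq_esymm (Icc 1 (n - 1)) fun k : ℕ ↦ 1 / sin (π * k / n) ^ 2
  simp only [esymm_one_div_sq_sin hn, prod_range_succ, prod_range_zero, Nat.factorial, div_pow,
    one_pow, ← pow_mul] at newton
  push_cast at newton
  rw [newton]
  ring

end CosecantSums

theorem stmt_10_general {n : ℕ} (hn : n ≠ 0) :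
    ((n : ℝ) ^ 4 / 2 ^ 9) * ∑ θ ∈ Finset.Icc 1 (n - 1), 1 / Real.sin (π * θ / n) ^ 8 =
      (3 * (n : ℝ) ^ 12 + 40 * n ^ 10 + 294 * n ^ 8 + 2160 * n ^ 6 - 2497 * n ^ 4)
        / 7257600 := by
  rw [sum_one_div_sin_pow_eight hn]
  ring

theorem stmt_10 (p : ℕ) (hp : p.Prime) (hodd : Odd p) (hp8 : 8 < p) :
    ((p : ℝ) ^ 4 / 2 ^ 9) * ∑ θ ∈ Finset.Icc 1 (p - 1), 1 / Real.sin (π * θ / p) ^ 8 =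
      (3 * (p : ℝ) ^ 12 + 40 * p ^ 10 + 294 * p ^ 8 + 2160 * p ^ 6 - 2497 * p ^ 4)
        / 7257600 :=
  stmt_10_general hp.ne_zero
end

section
/- Let p be an odd prime with p > 18. Then (p^9/2^19) · Σ_{θ=1}^{p-1} 1/sin^18(πθ/p) = (1/524288) · p^9 · ((87734/38979295480125)p^18 + (3617/54273594375)p^16 + (92/91216125)p^14 + (2092348/201131555625)p^12 + (4042/49116375)p^10 + (18716/35083125)p^8 + (119654944/40226311125)p^6 + (16229632/1064188125)p^4 + (32768/328185)p^2 - 23133945892303/194896477400625). (This is the genus-10 case of the degree formula of Corollary 5.4.) -/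
open Real

/-!
Since `1 - 2 sin² x = cos 2x`, the Chebyshev polynomial satisfies `T_p(1 - 2 sin² x) = cos 2px`, and
the known roots `cos (πθ/p)` of `U_{p-1}` give, as an identity of polynomials in `X = sin² x`,
`T_p(1 - 2X) = 1 - 2 p² X ∏ (1 - X / sin²(πθ/p))`, the product over `1 ≤ θ ≤ p - 1`.
The Chebyshev differential equation gives a two-term recurrence for the Taylor coefficients of `T_p`
at `1`, so the coefficients of the product on the right are explicit, and Newton's identities turn
them into the power sums of `1 / sin²(πθ/p)`, of which the ninth is wanted.
-/

open Polynomial Finset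

section NewtonIdentities

variable {R ι : Type*} [CommRing R]

lemma coeff_prod_one_sub_C_mul_X_s15 [Fintype ι] (f : ι → R) (k : ℕ) :
    (∏ i, (1 - C (f i) * X)).coeff k =
      (-1) ^ k * MvPolynomial.aeval f (MvPolynomial.esymm ι R k) := by
  have expand : ∏ i, (1 - C (f i) * X) =
      ∑ t : Finset ι, C ((-1) ^ #t * ∏ i ∈ t, f i) * X ^ #t := by
    classical
    simp only [sub_eq_add_neg, prod_one_add, powerset_univ, prod_neg, prod_mul_distrib, prod_const,
      map_mul, map_pow, map_neg, map_one, map_prod, mul_assoc]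
  simp only [expand, finsetSum_coeff, coeff_C_mul_X_pow, eq_comm (a := k),
    MvPolynomial.aeval_esymm_eq_multiset_esymm, esymm_map_val, mul_sum, powersetCard_eq_filter,
    sum_filter, powerset_univ]
  exact sum_congr rfl fun t _ => by split_ifs with ht <;> simp [ht]

lemma sum_coeff_prod_mul_sum_pow (s : Finset ι) (f : ι → R) (k : ℕ) :
    ∑ a ∈ antidiagonal k with a.1 < k,
        (∏ i ∈ s, (1 - C (f i) * X)).coeff a.1 * ∑ i ∈ s, f i ^ a.2 =
      -(k * (∏ i ∈ s, (1 - C (f i) * X)).coeff k) := by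
  have newton := congrArg (MvPolynomial.aeval fun i : s => f i)
    (MvPolynomial.mul_esymm_eq_sum s R k)
  simp only [map_mul, map_sum, map_pow, map_neg, map_one, map_natCast, MvPolynomial.psum,
    MvPolynomial.aeval_X] at newton
  simp only [← prod_coe_sort s, ← sum_coe_sort s, coeff_prod_one_sub_C_mul_X_s15]
  rw [mul_left_comm, newton, ← mul_assoc, ← pow_add, Odd.neg_one_pow ⟨k, by ring⟩, neg_one_mul,
    neg_neg]

lemma sum_pow_succ_eq_sub_sum_coeff_prod (s : Finset ι) (f : ι → R) (k : ℕ) :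
    ∑ i ∈ s, f i ^ (k + 1) = -((k + 1) * (∏ i ∈ s, (1 - C (f i) * X)).coeff (k + 1)) -
      ∑ a ∈ range k, (∏ i ∈ s, (1 - C (f i) * X)).coeff (a + 1) * ∑ i ∈ s, f i ^ (k - a) := by
  have newton := sum_coeff_prod_mul_sum_pow s f (k + 1)
  have coeff_zero : (∏ i ∈ s, (1 - C (f i) * X)).coeff 0 = 1 := by
    simp [coeff_zero_eq_eval_zero, eval_prod]
  rw [sum_filter, Nat.sum_antidiagonal_eq_sum_range_succ_mk, sum_range_succ,
    if_neg (lt_irrefl _), add_zero, sum_congr rfl fun a ha => if_pos (mem_range.mp ha),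
    sum_range_succ', coeff_zero, one_mul, Nat.sub_zero] at newton
  simp only [Nat.add_sub_add_right] at newton
  push_cast at newton
  exact eq_sub_of_add_eq' newton

end NewtonIdentities

section Chebyshev

lemma taylor_one_T_coeff_succ {R : Type*} [CommRing R] [IsDomain R] [CharZero R] (n : ℤ) (k : ℕ) :
    (2 * k + 1) * (k + 1) * (taylor 1 (Chebyshev.T R n)).coeff (k + 1) =
      (n ^ 2 - k ^ 2) * (taylor 1 (Chebyshev.T R n)).coeff k := by
  have iterate_derivative_eq (j : ℕ) : (derivative^[j] (Chebyshev.T R n)).eval 1 =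
      j.factorial * (taylor 1 (Chebyshev.T R n)).coeff j := by
    simp [taylor_coeff, ← factorial_smul_hasseDeriv]
  have recurrence := Chebyshev.iterate_derivative_T_eval_one_recurrence (R := R) n k
  rw [iterate_derivative_eq, iterate_derivative_eq, Nat.factorial_succ] at recurrence
  push_cast at recurrence
  refine mul_left_cancel₀ (Nat.cast_ne_zero.mpr k.factorial_ne_zero) ?_
  linear_combination recurrence

lemma U_eq_C_mul_prod (n : ℕ) :
    Chebyshev.U ℝ n = C (2 ^ n) * ∏ k ∈ Icc 1 n, (X - C (cos (π * k / (n + 1 : ℕ)))) := by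
  have injOn := (range n).nodup_map_iff_injOn.mp (Chebyshev.roots_U_real_nodup n)
  have card_roots : (Chebyshev.U ℝ n).roots.card = (Chebyshev.U ℝ n).natDegree := by
    rw [Chebyshev.roots_U_real, card_val, card_image_of_injOn injOn, card_range,
      Chebyshev.natDegree_U_natCast]
  have prod_roots : ((Chebyshev.U ℝ n).roots.map fun x => X - C x).prod =
      ∏ k ∈ range n, (X - C (cos ((k + 1) * π / (n + 1)))) := by
    rw [Chebyshev.roots_U_real]
    exact prod_image injOn
  rw [← C_leadingCoeff_mul_prod_multiset_X_sub_C card_roots, Chebyshev.leadingCoeff_U_natCast,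
    prod_roots, range_eq_Ico, ← Ico_add_one_right_eq_Icc,
    ← prod_Ico_add' (fun k : ℕ => X - C (cos (π * k / (n + 1 : ℕ)))) 0 n 1]
  simp [mul_comm]

lemma U_eval_cos_sq (n : ℕ) (x : ℝ) :
    (Chebyshev.U ℝ n).eval (cos x) ^ 2 =
      4 ^ n * ∏ k ∈ Icc 1 n, (sin (π * k / (n + 1 : ℕ)) ^ 2 - sin x ^ 2) := by
  have parity : (Chebyshev.U ℝ n).eval (cos x) = (-1) ^ n * (Chebyshev.U ℝ n).eval (-cos x) := by
    rw [Chebyshev.U_eval_neg]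
    simp [← mul_assoc, ← mul_pow]
  have pairing (k : ℕ) : sin (π * k / (n + 1 : ℕ)) ^ 2 - sin x ^ 2 =
      -((-cos x - cos (π * k / (n + 1 : ℕ))) * (cos x - cos (π * k / (n + 1 : ℕ)))) := by
    rw [sin_sq, sin_sq]
    ring
  calc (Chebyshev.U ℝ n).eval (cos x) ^ 2
      = (-1) ^ n * (Chebyshev.U ℝ n).eval (-cos x) * (Chebyshev.U ℝ n).eval (cos x) := by
        rw [sq, ← parity]
    _ = 4 ^ n * ∏ k ∈ Icc 1 n, (sin (π * k / (n + 1 : ℕ)) ^ 2 - sin x ^ 2) := by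
        simp only [U_eq_C_mul_prod, eval_mul, eval_C, eval_prod, eval_sub, eval_X, pairing,
          prod_neg, prod_mul_distrib, Nat.card_Icc, Nat.add_sub_cancel]
        rw [show (4 : ℝ) = 2 * 2 by norm_num, mul_pow]
        ring

lemma four_pow_mul_prod_sin_sq (n : ℕ) :
    4 ^ n * ∏ k ∈ Icc 1 n, sin (π * k / (n + 1 : ℕ)) ^ 2 = ((n + 1 : ℕ) : ℝ) ^ 2 := by
  simpa using (U_eval_cos_sq n 0).symm

end Chebyshev

/-- The polynomial with constant term `1` whose roots are the `sin² (πθ/p)`, `1 ≤ θ ≤ p - 1`: up to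
sign its coefficients are the elementary symmetric functions of the `csc² (πθ/p)`. -/
noncomputable def cscSqPoly (p : ℕ) : ℝ[X] :=
  ∏ θ ∈ Icc 1 (p - 1), (1 - C (1 / sin (π * θ / p) ^ 2) * X)

/-- The sum of `csc^{2k} (πθ/p)` over `1 ≤ θ ≤ p - 1`, as the `k`-th power sum of the
`csc² (πθ/p)`. -/
noncomputable def cscPowSum (p k : ℕ) : ℝ :=
  ∑ θ ∈ Icc 1 (p - 1), (1 / sin (π * θ / p) ^ 2) ^ k

lemma cscPowSum_succ (p k : ℕ) :
    cscPowSum p (k + 1) = -((k + 1) * (cscSqPoly p).coeff (k + 1)) -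
      ∑ a ∈ range k, (cscSqPoly p).coeff (a + 1) * cscPowSum p (k - a) :=
  sum_pow_succ_eq_sub_sum_coeff_prod _ _ _

lemma sin_pi_mul_div_ne_zero_s15 {p θ : ℕ} (hθ : θ ∈ Icc 1 (p - 1)) : sin (π * θ / p) ≠ 0 := by
  obtain ⟨hθ_pos, hθ_le⟩ := mem_Icc.mp hθ
  have hθ_lt : (θ : ℝ) < p := by exact_mod_cast (by omega : θ < p)
  have hp : (0 : ℝ) < p := by exact_mod_cast (by omega : 0 < p)
  refine (sin_pos_of_pos_of_lt_pi (by positivity) ?_).ne'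
  rw [div_lt_iff₀ hp]
  gcongr

section NeZero

variable (p : ℕ) [NeZero p]

lemma sin_natCast_mul_sq (x : ℝ) :
    sin (p * x) ^ 2 = p ^ 2 * sin x ^ 2 * (cscSqPoly p).eval (sin x ^ 2) := by
  obtain ⟨n, rfl⟩ := Nat.exists_eq_add_one_of_ne_zero (NeZero.ne p)
  have sin_mul : sin ((n + 1 : ℕ) * x) = (Chebyshev.U ℝ n).eval (cos x) * sin x := by
    rw [Chebyshev.U_real_cos]
    push_cast
    rfl
  have factor (θ : ℕ) (hθ : θ ∈ Icc 1 n) : sin (π * θ / (n + 1 : ℕ)) ^ 2 - sin x ^ 2 =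
      sin (π * θ / (n + 1 : ℕ)) ^ 2 * (1 - 1 / sin (π * θ / (n + 1 : ℕ)) ^ 2 * sin x ^ 2) := by
    have := sin_pi_mul_div_ne_zero_s15 (p := n + 1) hθ
    field_simp
  rw [sin_mul, mul_pow, U_eval_cos_sq, prod_congr rfl factor, prod_mul_distrib, ← mul_assoc,
    four_pow_mul_prod_sin_sq]
  simp only [cscSqPoly, Nat.add_sub_cancel, eval_prod, eval_sub, eval_one, eval_mul, eval_C, eval_X]
  ring

lemma T_comp_one_sub_two_mul_X :
    (Chebyshev.T ℝ p).comp (1 - C 2 * X) = 1 - C (2 * (p : ℝ) ^ 2) * (X * cscSqPoly p) := by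
  refine eq_of_infinite_eval_eq _ _ ((Set.Icc_infinite zero_lt_one).mono fun s hs => ?_)
  obtain ⟨x, rfl⟩ : ∃ x, sin x ^ 2 = s :=
    ⟨arcsin √s, by rw [sin_arcsin (by linarith [sqrt_nonneg s]) (sqrt_le_one.mpr hs.2),
      sq_sqrt hs.1]⟩
  have double_angle (y : ℝ) : 1 - 2 * sin y ^ 2 = cos (2 * y) := by
    rw [cos_two_mul, sin_sq]
    ring
  simp only [Set.mem_ofPred_eq, eval_comp, eval_sub, eval_one, eval_mul, eval_C, eval_X]
  rw [double_angle, Chebyshev.T_real_cos, Int.cast_natCast, mul_left_comm, ← double_angle,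
    sin_natCast_mul_sq]
  ring

lemma taylor_one_T_coeff_succ_mul_neg_two_pow (k : ℕ) :
    (taylor 1 (Chebyshev.T ℝ p)).coeff (k + 1) * (-2) ^ (k + 1) =
      -(2 * (p : ℝ) ^ 2 * (cscSqPoly p).coeff k) := by
  have comp_eq : (taylor 1 (Chebyshev.T ℝ p)).comp (C (-2) * X) =
      (Chebyshev.T ℝ p).comp (1 - C 2 * X) := by
    rw [taylor_apply, comp_assoc, add_comp, X_comp, C_comp, C_neg, C_1, neg_mul, neg_add_eq_sub]
  rw [← comp_C_mul_X_coeff, comp_eq, T_comp_one_sub_two_mul_X, coeff_sub, coeff_C_mul, coeff_X_mul,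
    coeff_one, if_neg k.succ_ne_zero, zero_sub]

lemma cscSqPoly_coeff_succ (k : ℕ) :
    (cscSqPoly p).coeff (k + 1) =
      2 * ((k + 1) ^ 2 - (p : ℝ) ^ 2) / ((2 * k + 3) * (k + 2)) * (cscSqPoly p).coeff k := by
  have hp : (p : ℝ) ≠ 0 := NeZero.ne _
  have recurrence := taylor_one_T_coeff_succ (R := ℝ) p (k + 1)
  have coeff_k := taylor_one_T_coeff_succ_mul_neg_two_pow p k
  have coeff_succ := taylor_one_T_coeff_succ_mul_neg_two_pow p (k + 1)
  push_cast at recurrence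
  rw [pow_succ] at coeff_succ
  rw [div_mul_eq_mul_div, eq_div_iff (by positivity)]
  refine mul_left_cancel₀ (mul_ne_zero two_ne_zero (pow_ne_zero 2 hp)) ?_
  linear_combination (2 * k + 3) * (k + 2) * coeff_succ + 2 * (-2) ^ (k + 1) * recurrence +
    2 * (p ^ 2 - (k + 1) ^ 2) * coeff_k

lemma cscSqPoly_coeff (k : ℕ) :
    (cscSqPoly p).coeff k =
      ∏ j ∈ range k, 2 * ((j + 1) ^ 2 - (p : ℝ) ^ 2) / ((2 * j + 3) * (j + 2)) := by
  induction k with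
  | zero => simp [cscSqPoly, coeff_zero_eq_eval_zero, eval_prod]
  | succ k ih => rw [cscSqPoly_coeff_succ, ih, prod_range_succ, mul_comm]

lemma cscPowSum_one : cscPowSum p 1 = 1 / 3 * (p : ℝ) ^ 2 - 1 / 3 := by
  simp only [cscPowSum_succ p 0, cscSqPoly_coeff, prod_range_succ, range_zero, prod_empty,
    sum_empty]
  push_cast
  ring

lemma cscPowSum_two : cscPowSum p 2 = 1 / 45 * (p : ℝ) ^ 4 + 2 / 9 * p ^ 2 - 11 / 45 := by
  simp only [cscPowSum_succ p 1, cscSqPoly_coeff, prod_range_succ, range_zero, prod_empty,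
    sum_range_succ, sum_empty, Nat.reduceAdd, Nat.reduceSub, cscPowSum_one]
  push_cast
  ring

lemma cscPowSum_three : cscPowSum p 3 =
    2 / 945 * (p : ℝ) ^ 6 + 1 / 45 * p ^ 4 + 8 / 45 * p ^ 2 - 191 / 945 := by
  simp only [cscPowSum_succ p 2, cscSqPoly_coeff, prod_range_succ, range_zero, prod_empty,
    sum_range_succ, sum_empty, Nat.reduceAdd, Nat.reduceSub, cscPowSum_one, cscPowSum_two]
  push_cast
  ring

lemma cscPowSum_four : cscPowSum p 4 =
    1 / 4725 * (p : ℝ) ^ 8 + 8 / 2835 * p ^ 6 + 14 / 675 * p ^ 4 + 16 / 105 * p ^ 2 -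
      2497 / 14175 := by
  simp only [cscPowSum_succ p 3, cscSqPoly_coeff, prod_range_succ, range_zero, prod_empty,
    sum_range_succ, sum_empty, Nat.reduceAdd, Nat.reduceSub, cscPowSum_one, cscPowSum_two,
    cscPowSum_three]
  push_cast
  ring

lemma cscPowSum_five : cscPowSum p 5 =
    2 / 93555 * (p : ℝ) ^ 10 + 1 / 2835 * p ^ 8 + 26 / 8505 * p ^ 6 + 164 / 8505 * p ^ 4 +
      128 / 945 * p ^ 2 - 14797 / 93555 := by
  simp only [cscPowSum_succ p 4, cscSqPoly_coeff, prod_range_succ, range_zero, prod_empty,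
    sum_range_succ, sum_empty, Nat.reduceAdd, Nat.reduceSub, cscPowSum_one, cscPowSum_two,
    cscPowSum_three, cscPowSum_four]
  push_cast
  ring

lemma cscPowSum_six : cscPowSum p 6 =
    1382 / 638512875 * (p : ℝ) ^ 12 + 4 / 93555 * p ^ 10 + 31 / 70875 * p ^ 8 +
      556 / 178605 * p ^ 6 + 3832 / 212625 * p ^ 4 + 256 / 2079 * p ^ 2 -
      92427157 / 638512875 := by
  simp only [cscPowSum_succ p 5, cscSqPoly_coeff, prod_range_succ, range_zero, prod_empty,
    sum_range_succ, sum_empty, Nat.reduceAdd, Nat.reduceSub, cscPowSum_one, cscPowSum_two,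
    cscPowSum_three, cscPowSum_four, cscPowSum_five]
  push_cast
  ring

lemma cscPowSum_seven : cscPowSum p 7 =
    4 / 18243225 * (p : ℝ) ^ 14 + 1382 / 273648375 * p ^ 12 + 4 / 66825 * p ^ 10 +
      311 / 637875 * p ^ 8 + 1184 / 382725 * p ^ 6 + 1888 / 111375 * p ^ 4 +
      1024 / 9009 * p ^ 2 - 36740617 / 273648375 := by
  simp only [cscPowSum_succ p 6, cscSqPoly_coeff, prod_range_succ, range_zero, prod_empty,
    sum_range_succ, sum_empty, Nat.reduceAdd, Nat.reduceSub, cscPowSum_one, cscPowSum_two,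
    cscPowSum_three, cscPowSum_four, cscPowSum_five, cscPowSum_six]
  push_cast
  ring

lemma cscPowSum_eight : cscPowSum p 8 =
    3617 / 162820783125 * (p : ℝ) ^ 16 + 32 / 54729675 * p ^ 14 +
      226648 / 28733079375 * p ^ 12 + 2144 / 29469825 * p ^ 10 + 4946 / 9568125 * p ^ 8 +
      268864 / 88409475 * p ^ 6 + 17067584 / 1064188125 * p ^ 4 + 2048 / 19305 * p ^ 2 -
      61430943169 / 488462349375 := by
  simp only [cscPowSum_succ p 7, cscSqPoly_coeff, prod_range_succ, range_zero, prod_empty,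
    sum_range_succ, sum_empty, Nat.reduceAdd, Nat.reduceSub, cscPowSum_one, cscPowSum_two,
    cscPowSum_three, cscPowSum_four, cscPowSum_five, cscPowSum_six, cscPowSum_seven]
  push_cast
  ring

lemma cscPowSum_nine : cscPowSum p 9 =
    87734 / 38979295480125 * (p : ℝ) ^ 18 + 3617 / 54273594375 * p ^ 16 +
      92 / 91216125 * p ^ 14 + 2092348 / 201131555625 * p ^ 12 + 4042 / 49116375 * p ^ 10 +
      18716 / 35083125 * p ^ 8 + 119654944 / 40226311125 * p ^ 6 +
      16229632 / 1064188125 * p ^ 4 + 32768 / 328185 * p ^ 2 -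
      23133945892303 / 194896477400625 := by
  simp only [cscPowSum_succ p 8, cscSqPoly_coeff, prod_range_succ, range_zero, prod_empty,
    sum_range_succ, sum_empty, Nat.reduceAdd, Nat.reduceSub, cscPowSum_one, cscPowSum_two,
    cscPowSum_three, cscPowSum_four, cscPowSum_five, cscPowSum_six, cscPowSum_seven,
    cscPowSum_eight]
  push_cast
  ring

end NeZero

theorem stmt_15_general (p : ℕ) (hp : p ≠ 0) :
    ((p : ℝ) ^ 9 / 2 ^ 19) * ∑ θ ∈ Finset.Icc 1 (p - 1), 1 / Real.sin (π * θ / p) ^ 18 =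
      (1 / 524288) * (p : ℝ) ^ 9 * ((87734 / 38979295480125) * (p : ℝ) ^ 18 +
        (3617 / 54273594375) * p ^ 16 + (92 / 91216125) * p ^ 14 +
        (2092348 / 201131555625) * p ^ 12 + (4042 / 49116375) * p ^ 10 +
        (18716 / 35083125) * p ^ 8 + (119654944 / 40226311125) * p ^ 6 +
        (16229632 / 1064188125) * p ^ 4 + (32768 / 328185) * p ^ 2 -
        23133945892303 / 194896477400625) := by
  have : NeZero p := ⟨hp⟩
  have sum_eq : ∑ θ ∈ Icc 1 (p - 1), 1 / sin (π * θ / p) ^ 18 = cscPowSum p 9 := by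
    simp only [cscPowSum, div_pow, one_pow, ← pow_mul]
  rw [sum_eq, cscPowSum_nine]
  ring

theorem stmt_15 (p : ℕ) (hp : p.Prime) (hodd : Odd p) (hp18 : 18 < p) :
    ((p : ℝ) ^ 9 / 2 ^ 19) * ∑ θ ∈ Finset.Icc 1 (p - 1), 1 / Real.sin (π * θ / p) ^ 18 =
      (1 / 524288) * (p : ℝ) ^ 9 * ((87734 / 38979295480125) * (p : ℝ) ^ 18 +
        (3617 / 54273594375) * p ^ 16 + (92 / 91216125) * p ^ 14 +
        (2092348 / 201131555625) * p ^ 12 + (4042 / 49116375) * p ^ 10 +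
        (18716 / 35083125) * p ^ 8 + (119654944 / 40226311125) * p ^ 6 +
        (16229632 / 1064188125) * p ^ 4 + (32768 / 328185) * p ^ 2 -
        23133945892303 / 194896477400625) := by
  exact stmt_15_general p hp.ne_zero
end
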